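/- Let d be an even natural number, D := d/2, and let Γ be a (D−1)-dimensional simplicial complex on a vertex set V, balanced via a map c : V → {1,…,D} that is injective on every face. Set h_i := f_{i−1}(Γ) for 0 ≤ i ≤ D and define g(2w) := h_D + 2·Σ_{j=1}^{D} h_{D−j}·T_j(w) ∈ ℚ[w], where T_j is the j-th Chebyshev polynomial of the first kind. Let A_Γ := { {(F,q,[q ∈ B]) : q ∈ Q} : (F,Q,B) a face of D(Γ) } be the collection of vertex sets of faces of the signed unused color complex D(Γ), viewed as a finite collection of nonempty finite subsets of the (arbitrarily linearly ordered) set of triples (F,q,ε). Then the following identity holds in ℚ[w]: (g(2w) + f_{D−1}(Γ))/2 − Σ_{j=0}^{D} f_{D−j−1}(Γ) + 1 = 1 + Σ_{k=1}^{D} f_{k−1}(T(A_Γ))·((w−1)/2)^k, i.e. the left-hand side equals the F-polynomial F_{T(A_Γ)}(w) of the Tchebyshev triangulation of D(Γ). -/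

import Mathlib

open Finset

/-- A (finite, abstract) simplicial complex on a subset of `ℕ`: a finite collection of finite
sets containing the empty set and closed under taking subsets. -/
def IsSimplicialComplex (S : Finset (Finset ℕ)) : Prop :=
  ∅ ∈ S ∧ ∀ σ ∈ S, ∀ τ ⊆ σ, τ ∈ S

/-- `faceCount Δ k` is the number of faces of `Δ` of cardinality `k`,
i.e. `f_{k-1}(Δ)` in the usual indexing. -/
def faceCount (Δ : Finset (Finset ℕ)) (k : ℕ) : ℕ :=
  (Δ.filter fun σ => σ.card = k).card

/-- The set of vertices of the original complex underlying a vertex `(u, v)` of the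
Tchebyshev triangulation: `{u, v} ∖ {1̂}`, where `1̂ = ⊤`. -/
def pairVertexSet {α : Type*} [DecidableEq α] (p : α × WithTop α) : Finset α :=
  WithTop.recTopCoe {p.1} (fun a => {p.1, a}) p.2

/-- The `(k-1)`-dimensional faces of the Tchebyshev triangulation `T(A)` of a collection `A`
of nonempty finite subsets of a linearly ordered set `V`. -/
def tchebFaces {α : Type*} [LinearOrder α] [DecidableEq α]
    (A : Finset (Finset α)) (k : ℕ) : Set (Finset (α × WithTop α)) :=
  {σ | ∃ e : Fin k → α × WithTop α,
      σ = Finset.image e Finset.univ ∧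
      StrictMono (fun i => (e i).2) ∧
      (∀ i, ((e i).1 : WithTop α) < (e i).2) ∧
      (Finset.univ.biUnion fun i => pairVertexSet (e i)) ∈ A ∧
      (∀ i j : Fin k, (i : ℕ) + 1 = (j : ℕ) →
        (e i).1 = (e j).1 ∨ (e i).2 ≤ ((e j).1 : WithTop α))}

/-- The collection `A_Γ` of vertex sets of faces of the signed unused color complex `D(Γ)`:
for each face `(F, Q, B)` of `D(Γ)` (with `F ∈ Γ`, `∅ ≠ Q ⊆ C_F`, `B ⊆ Q`), the set
`{(F, q, [q ∈ B]) : q ∈ Q}` of triples. -/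
def signedUnusedVertexSets (Γ : Finset (Finset ℕ)) (c : ℕ → ℕ) (D : ℕ) :
    Finset (Finset (Finset ℕ × ℕ × Bool)) :=
  Γ.biUnion fun F =>
    (((Finset.Icc 1 D \ F.image c).powerset.filter fun Q => Q ≠ ∅).biUnion fun Q =>
      Q.powerset.image fun B => Q.image fun q => (F, q, decide (q ∈ B)))

/-- The relation between an earlier and a later vertex in a face of the triangulation. -/
def TRel {α : Type*} [LinearOrder α] (p q : α × WithTop α) : Prop :=
  p.2 < q.2 ∧ (p.1 = q.1 ∨ p.2 ≤ (q.1 : WithTop α))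

/-- Lists of vertices forming a face. -/
def TGood {α : Type*} [LinearOrder α] (l : List (α × WithTop α)) : Prop :=
  l.Pairwise TRel ∧ ∀ p ∈ l, (p.1 : WithTop α) < p.2

/-- Vertices used by a list of pairs. -/
def TV {α : Type*} (l : List (α × WithTop α)) (x : α) : Prop :=
  ∃ p ∈ l, p.1 = x ∨ p.2 = (x : WithTop α)

/-- Enumeration of the faces with a given sorted vertex list. -/
def TL {α : Type*} : List α → List (List (α × WithTop α))
  | [] => [[]]
  | [a] => [[(a, ⊤)]]
  | a :: b :: S => (TL (a :: S) ++ TL (b :: S) ++ TL S).map (fun l => (a, (b : WithTop α)) :: l)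
termination_by S => S.length

/-- Number of faces of cardinality `k` with given `n`-element vertex set. -/
def TN : ℕ → ℕ → ℕ
  | 0, k => if k = 0 then 1 else 0
  | 1, k => if k = 1 then 1 else 0
  | _ + 2, 0 => 0
  | n + 2, k + 1 => TN (n + 1) k + TN (n + 1) k + TN n k

theorem TV_cons {α : Type*} (p : α × WithTop α) (l : List (α × WithTop α)) (x : α) :
    TV (p :: l) x ↔ (p.1 = x ∨ p.2 = (x : WithTop α)) ∨ TV l x := by
  simp [TV]

theorem TGood_cons {α : Type*} [LinearOrder α] (p : α × WithTop α) (l : List (α × WithTop α)) :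
    TGood (p :: l) ↔ (∀ q ∈ l, TRel p q) ∧ (p.1 : WithTop α) < p.2 ∧ TGood l := by
  simp only [TGood, List.pairwise_cons, List.mem_cons, forall_eq_or_imp]
  tauto

theorem mem_TL_cons2 {α : Type*} (a b : α) (S : List α) (l : List (α × WithTop α)) :
    l ∈ TL (a :: b :: S) ↔ ∃ l', (l' ∈ TL (a :: S) ∨ l' ∈ TL (b :: S) ∨ l' ∈ TL S) ∧
      l = (a, (b : WithTop α)) :: l' := by
  rw [TL]
  simp only [List.mem_map, List.mem_append, or_assoc, eq_comm]

theorem TL_fwd {α : Type*} [LinearOrder α] (a b : α) (S T : List α)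
    (hab : a < b) (hS : ∀ x ∈ S, b < x) (l : List (α × WithTop α)) (hl : TGood l)
    (hv : ∀ x, x ∈ T ↔ TV l x) (hT : T = a :: S ∨ T = b :: S ∨ T = S) :
    TGood ((a, (b : WithTop α)) :: l) ∧ ∀ x, x ∈ a :: b :: S ↔ TV ((a, (b : WithTop α)) :: l) x := by
  have hTm : ∀ x ∈ T, x = a ∨ x = b ∨ x ∈ S := by
    intro x hx
    rcases hT with rfl | rfl | rfl
    · simp only [List.mem_cons] at hx; tauto
    · simp only [List.mem_cons] at hx; tauto
    · tauto
  have hab2 : ¬ (a ∈ T ∧ b ∈ T) := by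
    rintro ⟨h1, h2⟩
    rcases hT with rfl | rfl | rfl
    · simp only [List.mem_cons] at h2
      rcases h2 with h2 | h2
      · exact hab.ne' h2
      · exact lt_irrefl _ (hS _ h2)
    · simp only [List.mem_cons] at h1
      rcases h1 with h1 | h1
      · exact hab.ne h1
      · exact lt_asymm hab (hS _ h1)
    · exact lt_asymm hab (hS _ h1)
  constructor
  · rw [TGood_cons]
    refine ⟨?_, by simpa using hab, hl⟩
    rintro ⟨u, v⟩ hq
    have huv := hl.2 _ hq
    have hu : u ∈ T := (hv u).2 ⟨_, hq, Or.inl rfl⟩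
    simp only [TRel] at huv ⊢
    induction v using WithTop.recTopCoe with
    | top =>
      refine ⟨WithTop.coe_lt_top _, ?_⟩
      rcases hTm u hu with h | h | h
      · exact Or.inl h.symm
      · right; simp [h]
      · right; simpa using (hS _ h).le
    | coe v =>
      have hvT : v ∈ T := (hv v).2 ⟨_, hq, Or.inr rfl⟩
      simp only [WithTop.coe_lt_coe, WithTop.coe_le_coe] at huv ⊢
      have hu' := hTm u hu
      have hv' := hTm v hvT
      have : a ≤ u := by
        rcases hu' with h | h | h
        · exact h.ge
        · rw [h]; exact hab.le
        · exact (hab.trans (hS _ h)).le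
      constructor
      · rcases hv' with h | h | h
        · exact absurd huv (by rw [h]; exact not_lt.2 this)
        · exfalso
          rcases hu' with h' | h' | h'
          · exact hab2 ⟨h' ▸ hu, h ▸ hvT⟩
          · rw [h, h'] at huv; exact lt_irrefl _ huv
          · rw [h] at huv; exact lt_asymm huv (hS _ h')
        · exact hS _ h
      · rcases hu' with h | h | h
        · exact Or.inl h.symm
        · right; simp [h]
        · right; exact (hS _ h).le
  · intro x
    rw [TV_cons, ← hv]
    simp only [WithTop.coe_inj, List.mem_cons]
    rcases hT with rfl | rfl | rfl
    · simp only [List.mem_cons]; grind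
    · simp only [List.mem_cons]; grind
    · grind

theorem TL_bwd {α : Type*} [LinearOrder α] (a b : α) (S : List α)
    (hab : a < b) (hS : ∀ x ∈ S, b < x) (l : List (α × WithTop α)) (hl : TGood l)
    (hv : ∀ x, x ∈ a :: b :: S ↔ TV l x) :
    ∃ l', l = (a, (b : WithTop α)) :: l' ∧ TGood l' ∧ ∃ T,
      (∀ x, x ∈ T ↔ TV l' x) ∧ (T = a :: S ∨ T = b :: S ∨ T = S) := by
  rcases l with _ | ⟨⟨u, v⟩, l'⟩
  · have := (hv a).1 (by simp)
    simp [TV] at this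
  have hla : ∀ x ∈ a :: b :: S, a ≤ x := by
    intro x hx
    simp only [List.mem_cons] at hx
    rcases hx with h | h | h
    · exact h.ge
    · rw [h]; exact hab.le
    · exact (hab.trans (hS _ h)).le
  have hlb : ∀ x ∈ a :: b :: S, a < x → b ≤ x := by
    intro x hx hax
    simp only [List.mem_cons] at hx
    rcases hx with h | h | h
    · exact absurd h hax.ne'
    · exact h.ge
    · exact (hS _ h).le
  obtain ⟨hR, huv, hl'⟩ := (TGood_cons _ _).1 hl
  have hu : u = a := by
    have hau := hla u ((hv u).2 ⟨_, List.mem_cons_self, Or.inl rfl⟩)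
    refine le_antisymm ?_ hau
    obtain ⟨r, hr, hra⟩ := (hv a).1 (by simp)
    have hr2 := hl.2 r hr
    have hur : u ≤ r.1 := by
      rcases List.mem_cons.1 hr with h | h
      · rw [h]
      · rcases (hR r h).2 with h1 | h1
        · exact le_of_eq h1
        · exact WithTop.coe_le_coe.1 (huv.le.trans h1)
    rcases hra with h | h
    · rwa [h] at hur
    · rw [h, WithTop.coe_lt_coe] at hr2
      exact hur.trans hr2.le
  subst hu
  have hvb : v = (b : WithTop α) := by
    obtain ⟨r, hr, hrb⟩ := (hv b).1 (by simp)
    induction v using WithTop.recTopCoe with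
    | top =>
      exfalso
      rcases List.mem_cons.1 hr with h | h
      · subst h
        simp at hrb
        exact hab.ne hrb
      · have := (hR r h).1
        simp at this
    | coe v =>
      have huv' : u < v := by simpa using huv
      have hbv := hlb v ((hv v).2 ⟨_, List.mem_cons_self, Or.inr rfl⟩) huv'
      congr 1
      refine le_antisymm ?_ hbv
      rcases List.mem_cons.1 hr with h | h
      · subst h
        simp only [WithTop.coe_inj] at hrb
        rcases hrb with h | h
        · exact absurd h hab.ne
        · exact h.le
      · obtain ⟨h1, h2⟩ := hR r h
        simp only at h1 h2
        rcases hrb with h3 | h3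
        · rw [h3] at h2
          rcases h2 with h2 | h2
          · exact absurd h2 hab.ne
          · simpa using h2
        · rw [h3, WithTop.coe_lt_coe] at h1
          exact h1.le
  subst hvb
  refine ⟨l', rfl, hl', ?_⟩
  have hgt : ∀ r ∈ l', (b : WithTop α) < r.2 := fun r hr => (hR r hr).1
  have hva : ¬ (TV l' u ∧ TV l' b) := by
    rintro ⟨⟨r, hr, hru⟩, ⟨s, hs, hsb⟩⟩
    have hr1 : r.1 = u := by
      rcases hru with h | h
      · exact h
      · have := hgt r hr
        rw [h, WithTop.coe_lt_coe] at this
        exact absurd hab this.asymm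
    have hs1 : s.1 = b := by
      rcases hsb with h | h
      · exact h
      · have := hgt s hs
        rw [h] at this
        exact absurd this (lt_irrefl _)
    have key : ∀ x y, x ∈ l' → y ∈ l' → TRel x y → x.1 ≠ y.1 → b < y.1 := by
      intro x y hx hy hxy hne
      rcases hxy.2 with h | h
      · exact absurd h hne
      · exact WithTop.coe_lt_coe.1 ((hgt x hx).trans_le h)
    obtain ⟨i, hi, rfl⟩ := List.getElem_of_mem hr
    obtain ⟨j, hj, rfl⟩ := List.getElem_of_mem hs
    have hp := List.pairwise_iff_getElem.1 hl'.1
    rcases lt_trichotomy i j with h | h | h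
    · have := key _ _ hr hs (hp i j hi hj h) (by rw [hr1, hs1]; exact hab.ne)
      rw [hs1] at this
      exact lt_irrefl _ this
    · subst h
      exact hab.ne (hr1.symm.trans hs1)
    · have := key _ _ hs hr (hp j i hj hi h) (by rw [hr1, hs1]; exact hab.ne')
      rw [hr1] at this
      exact lt_asymm hab this
  have hv' : ∀ x, (x = u ∨ x = b ∨ x ∈ S) ↔ ((u = x ∨ b = x) ∨ TV l' x) := by
    intro x
    have := hv x
    rw [TV_cons] at this
    simpa using this
  have hSv : ∀ x, x ∈ S → TV l' x := by
    intro x hx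
    rcases (hv' x).1 (Or.inr (Or.inr hx)) with (h | h) | h
    · exact absurd (hS x hx) (by rw [← h]; exact hab.asymm)
    · exact absurd (hS x hx) (by rw [← h]; exact lt_irrefl _)
    · exact h
  by_cases h1 : TV l' u
  · refine ⟨u :: S, fun x => ?_, Or.inl rfl⟩
    have h2 : ¬ TV l' b := fun h => hva ⟨h1, h⟩
    rw [List.mem_cons]
    constructor
    · rintro (rfl | h)
      · exact h1
      · exact hSv x h
    · intro h
      rcases (hv' x).2 (Or.inr h) with h3 | h3 | h3
      · exact Or.inl h3
      · exact absurd (h3 ▸ h) h2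
      · exact Or.inr h3
  · by_cases h2 : TV l' b
    · refine ⟨b :: S, fun x => ?_, Or.inr (Or.inl rfl)⟩
      rw [List.mem_cons]
      constructor
      · rintro (rfl | h)
        · exact h2
        · exact hSv x h
      · intro h
        rcases (hv' x).2 (Or.inr h) with h3 | h3 | h3
        · exact absurd (h3 ▸ h) h1
        · exact Or.inl h3
        · exact Or.inr h3
    · refine ⟨S, fun x => ⟨hSv x, ?_⟩, Or.inr (Or.inr rfl)⟩
      intro h
      rcases (hv' x).2 (Or.inr h) with h3 | h3 | h3
      · exact absurd (h3 ▸ h) h1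
      · exact absurd (h3 ▸ h) h2
      · exact h3

theorem mem_TL {α : Type*} [LinearOrder α] : ∀ (n : ℕ) (S : List α), S.length ≤ n →
    S.Pairwise (· < ·) → ∀ l : List (α × WithTop α),
      l ∈ TL S ↔ TGood l ∧ ∀ x, x ∈ S ↔ TV l x := by
  intro n
  induction n with
  | zero =>
    intro S hS _ l
    have : S = [] := by simpa using hS
    subst this
    rw [TL]
    rcases l with _ | ⟨p, l⟩
    · simp [TGood, TV]
    · simp only [List.mem_singleton, reduceCtorEq, false_iff]
      rintro ⟨-, h⟩
      have := (h p.1).2 ⟨p, List.mem_cons_self, Or.inl rfl⟩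
      simp at this
  | succ n ih =>
    intro S hS hs l
    rcases S with _ | ⟨a, _ | ⟨b, S⟩⟩
    · exact ih [] (by simp) hs l
    · rw [TL]
      simp only [List.mem_singleton]
      constructor
      · rintro rfl
        simp [TGood, TV, eq_comm]
      · rintro ⟨hg, h⟩
        have hall : ∀ p ∈ l, p = (a, ⊤) := by
          rintro ⟨u, v⟩ hp
          have h1 : u = a := (h u).2 ⟨_, hp, Or.inl rfl⟩
          subst h1
          induction v using WithTop.recTopCoe with
          | top => rfl
          | coe v =>
            have h2 : v = u := (h v).2 ⟨_, hp, Or.inr rfl⟩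
            have := hg.2 _ hp
            simp [h2] at this
        rcases l with _ | ⟨p, _ | ⟨q, l⟩⟩
        · have := (h a).1 rfl
          simp [TV] at this
        · rw [hall p (by simp)]
        · have := ((TGood_cons _ _).1 hg).1 q (by simp)
          rw [hall p (by simp), hall q (by simp)] at this
          simp [TRel] at this
    · simp only [List.pairwise_cons, List.mem_cons, forall_eq_or_imp] at hs
      obtain ⟨⟨hab, haS⟩, hbS, hSS⟩ := hs
      simp only [List.length_cons] at hS
      have i1 := ih (a :: S) (by simp; omega) (by simp [List.pairwise_cons, hSS]; exact haS)
      have i2 := ih (b :: S) (by simp; omega) (by simp [List.pairwise_cons, hSS]; exact hbS)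
      have i3 := ih S (by omega) hSS
      rw [mem_TL_cons2]
      constructor
      · rintro ⟨l', h | h | h, rfl⟩
        · rw [i1] at h
          exact TL_fwd a b S _ hab hbS l' h.1 h.2 (by simp)
        · rw [i2] at h
          exact TL_fwd a b S _ hab hbS l' h.1 h.2 (by simp)
        · rw [i3] at h
          exact TL_fwd a b S _ hab hbS l' h.1 h.2 (by simp)
      · rintro ⟨hg, hv⟩
        obtain ⟨l', rfl, hg', T, hT, rfl | rfl | rfl⟩ := TL_bwd a b S hab hbS l hg hv
        · exact ⟨l', Or.inl ((i1 l').2 ⟨hg', hT⟩), rfl⟩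
        · exact ⟨l', Or.inr (Or.inl ((i2 l').2 ⟨hg', hT⟩)), rfl⟩
        · exact ⟨l', Or.inr (Or.inr ((i3 l').2 ⟨hg', hT⟩)), rfl⟩

theorem nodup_TL {α : Type*} [LinearOrder α] : ∀ (n : ℕ) (S : List α), S.length ≤ n →
    S.Pairwise (· < ·) → (TL S).Nodup := by
  intro n
  induction n with
  | zero =>
    intro S hS _
    have : S = [] := by simpa using hS
    subst this
    rw [TL]; simp
  | succ n ih =>
    intro S hS hs
    rcases S with _ | ⟨a, _ | ⟨b, S⟩⟩
    · exact ih [] (by simp) hs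
    · rw [TL]; simp
    · simp only [List.pairwise_cons, List.mem_cons, forall_eq_or_imp] at hs
      obtain ⟨⟨hab, haS⟩, hbS, hSS⟩ := hs
      simp only [List.length_cons] at hS
      have p1 : (a :: S).Pairwise (· < ·) := by simp [List.pairwise_cons, hSS]; exact haS
      have p2 : (b :: S).Pairwise (· < ·) := by simp [List.pairwise_cons, hSS]; exact hbS
      have i1 := ih (a :: S) (by simp; omega) p1
      have i2 := ih (b :: S) (by simp; omega) p2
      have i3 := ih S (by omega) hSS
      have m1 := mem_TL _ (a :: S) le_rfl p1
      have m2 := mem_TL _ (b :: S) le_rfl p2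
      have m3 := mem_TL _ S le_rfl hSS
      have na : a ∉ S := fun h => lt_irrefl _ (haS a h)
      have nb : b ∉ S := fun h => lt_irrefl _ (hbS b h)
      rw [TL]
      refine List.Nodup.map (fun x y h => by simpa using h) ?_
      rw [List.nodup_append', List.nodup_append']
      refine ⟨⟨i1, i2, ?_⟩, i3, ?_⟩
      · intro l h1 h2
        rw [m1] at h1
        rw [m2] at h2
        have := (h2.2 a).2 ((h1.2 a).1 (by simp))
        simp [hab.ne, na] at this
      · intro l h1 h3
        rw [m3] at h3
        rcases List.mem_append.1 h1 with h1 | h1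
        · rw [m1] at h1
          exact na ((h3.2 a).2 ((h1.2 a).1 (by simp)))
        · rw [m2] at h1
          exact nb ((h3.2 b).2 ((h1.2 b).1 (by simp)))

theorem countP_TL {α : Type*} : ∀ (n : ℕ) (S : List α), S.length ≤ n → ∀ k,
    (TL S).countP (fun l => l.length = k) = TN S.length k := by
  intro n
  induction n with
  | zero =>
    intro S hS k
    have : S = [] := by simpa using hS
    subst this
    rw [TL]; simp [TN, List.countP_cons, eq_comm]
  | succ n ih =>
    intro S hS k
    rcases S with _ | ⟨a, _ | ⟨b, S⟩⟩
    · exact ih [] (by simp) k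
    · rw [TL]; simp [TN, List.countP_cons, eq_comm]
    · simp only [List.length_cons] at hS
      rw [TL, List.countP_map]
      rcases k with _ | k
      · simp [TN, Function.comp_def]
      · have i1 := ih (a :: S) (by simp; omega) k
        have i2 := ih (b :: S) (by simp; omega) k
        have i3 := ih S (by omega) k
        simp only [List.length_cons] at i1 i2
        simp only [Function.comp_def, List.length_cons, Nat.add_right_cancel_iff,
          List.countP_append, TN, i1, i2, i3]

theorem TGood_inj {α : Type*} [LinearOrder α] (l m : List (α × WithTop α)) (hl : TGood l)
    (hm : TGood m) (h : ∀ x, x ∈ l ↔ x ∈ m) : l = m := by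
  have nd : ∀ l : List (α × WithTop α), TGood l → l.Nodup := by
    intro l hl
    refine hl.1.imp ?_
    rintro a b hab rfl
    exact lt_irrefl _ hab.1
  have hp : l.Perm m := (List.perm_ext_iff_of_nodup (nd l hl) (nd m hm)).2 h
  refine hp.eq_of_pairwise ?_ hl.1 hm.1
  intro a b _ _ h1 h2
  exact absurd h1.1 h2.1.asymm

theorem mem_pairVertexSet' {α : Type*} [DecidableEq α] (p : α × WithTop α) (x : α) :
    x ∈ pairVertexSet p ↔ p.1 = x ∨ p.2 = (x : WithTop α) := by
  obtain ⟨u, v⟩ := p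
  induction v using WithTop.recTopCoe with
  | top => simp [pairVertexSet, eq_comm]
  | coe v => simp [pairVertexSet, eq_comm]

theorem mem_tchebFaces' {α : Type*} [LinearOrder α] [DecidableEq α]
    (A : Finset (Finset α)) (k : ℕ) (σ : Finset (α × WithTop α)) :
    σ ∈ tchebFaces A k ↔ ∃ l : List (α × WithTop α), (∀ x, x ∈ σ ↔ x ∈ l) ∧ l.length = k ∧
      TGood l ∧ ∃ S ∈ A, ∀ x, x ∈ S ↔ TV l x := by
  constructor
  · rintro ⟨e, rfl, hmono, hlt, hA, hadj⟩
    refine ⟨List.ofFn e, ?_, by simp, ⟨?_, ?_⟩, _, hA, ?_⟩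
    · intro x; simp [List.mem_ofFn]
    · rw [List.pairwise_ofFn]
      have key : ∀ (n : ℕ) (i j : Fin k), (j : ℕ) = i + 1 + n → TRel (e i) (e j) := by
        intro n
        induction n with
        | zero =>
          intro i j hij
          exact ⟨hmono (Fin.lt_def.2 (by omega)), hadj i j (by omega)⟩
        | succ n ih =>
          intro i j hij
          have hj := j.2
          refine ⟨hmono (Fin.lt_def.2 (by omega)), ?_⟩
          obtain ⟨h1, h2⟩ := ih i ⟨i + 1 + n, by omega⟩ rfl
          have h3 := hadj ⟨i + 1 + n, by omega⟩ j (by simp; omega)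
          have h4 := hlt ⟨i + 1 + n, by omega⟩
          rcases h2 with h2 | h2
          · rcases h3 with h3 | h3
            · exact Or.inl (h2.trans h3)
            · exact Or.inr (h1.le.trans h3)
          · rcases h3 with h3 | h3
            · exact Or.inr (h3 ▸ h2)
            · exact Or.inr (h2.trans (h4.le.trans h3))
      intro i j hij
      exact key (j - i - 1) i j (by have := Fin.lt_def.1 hij; omega)
    · intro p hp
      obtain ⟨i, rfl⟩ := (List.mem_ofFn' _ _).1 hp
      exact hlt i
    · intro x
      simp only [Finset.mem_biUnion, Finset.mem_univ, true_and, mem_pairVertexSet', TV,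
        List.mem_ofFn]
      constructor
      · rintro ⟨i, hi⟩; exact ⟨_, ⟨i, rfl⟩, hi⟩
      · rintro ⟨_, ⟨i, rfl⟩, hi⟩; exact ⟨i, hi⟩
  · rintro ⟨l, hσ, rfl, hg, S, hS, hv⟩
    have hp := List.pairwise_iff_getElem.1 hg.1
    refine ⟨fun i => l[i], ?_, ?_, ?_, ?_, ?_⟩
    · ext x
      rw [hσ, List.mem_iff_getElem]
      simp only [Finset.mem_image, Finset.mem_univ, true_and]
      constructor
      · rintro ⟨i, hi, h⟩; exact ⟨⟨i, hi⟩, h⟩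
      · rintro ⟨⟨i, hi⟩, h⟩; exact ⟨i, hi, h⟩
    · intro i j hij
      exact (hp i j i.2 j.2 hij).1
    · intro i
      exact hg.2 _ (List.getElem_mem _)
    · convert hS
      ext x
      rw [hv]
      simp only [Finset.mem_biUnion, Finset.mem_univ, true_and, mem_pairVertexSet', TV]
      constructor
      · rintro ⟨i, hi⟩; exact ⟨_, List.getElem_mem _, hi⟩
      · rintro ⟨p, hp, hi⟩
        obtain ⟨i, hi', rfl⟩ := List.getElem_of_mem hp
        exact ⟨⟨i, hi'⟩, hi⟩
    · intro i j hij
      exact (hp i j i.2 j.2 (by omega)).2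

theorem ncard_tchebFaces {α : Type*} [LinearOrder α] [DecidableEq α]
    (A : Finset (Finset α)) (k : ℕ) :
    (tchebFaces A k).ncard = ∑ S ∈ A, TN S.card k := by
  classical
  let U : Finset (List (α × WithTop α)) :=
    A.biUnion fun S => ((TL (S.sort (· ≤ ·))).filter (fun l => l.length = k)).toFinset
  have hm : ∀ S : Finset α, ∀ l, l ∈ TL (S.sort (· ≤ ·)) ↔ TGood l ∧ ∀ x, x ∈ S ↔ TV l x := by
    intro S l
    have := mem_TL _ (S.sort (· ≤ ·)) le_rfl (Finset.sortedLT_sort S).pairwise l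
    simpa using this
  have hU : ∀ l, l ∈ U ↔ l.length = k ∧ TGood l ∧ ∃ S ∈ A, ∀ x, x ∈ S ↔ TV l x := by
    intro l
    simp only [U, Finset.mem_biUnion, List.mem_toFinset, List.mem_filter, hm, decide_eq_true_eq]
    constructor
    · rintro ⟨S, hS, ⟨h1, h2⟩, h3⟩; exact ⟨h3, h1, S, hS, h2⟩
    · rintro ⟨h3, h1, S, hS, h2⟩; exact ⟨S, hS, ⟨h1, h2⟩, h3⟩
  have him : tchebFaces A k = (fun l : List (α × WithTop α) => l.toFinset) '' (U : Set _) := by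
    ext σ
    rw [mem_tchebFaces']
    simp only [Set.mem_image, Finset.mem_coe, hU]
    constructor
    · rintro ⟨l, h1, h2⟩
      exact ⟨l, h2, by ext x; simp [h1]⟩
    · rintro ⟨l, h2, rfl⟩
      exact ⟨l, by simp, h2⟩
  rw [him, Set.InjOn.ncard_image, Set.ncard_coe_finset]
  · rw [Finset.card_biUnion]
    · refine Finset.sum_congr rfl fun S _ => ?_
      rw [List.toFinset_card_of_nodup, ← List.countP_eq_length_filter]
      · have := countP_TL _ (S.sort (· ≤ ·)) le_rfl k
        rwa [Finset.length_sort] at this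
      · exact (nodup_TL _ _ le_rfl (Finset.sortedLT_sort S).pairwise).filter _
    · intro S _ T _ hST
      rw [Function.onFun, Finset.disjoint_left]
      intro l h1 h2
      simp only [List.mem_toFinset, List.mem_filter, hm] at h1 h2
      exact hST (by ext x; rw [h1.1.2, h2.1.2])
  · intro l hl m hm' h
    simp only [Finset.mem_coe, hU] at hl hm'
    refine TGood_inj l m hl.2.1 hm'.2.1 fun x => ?_
    have := congrArg (fun s => x ∈ s) h
    simpa using this

theorem TN_eq_zero : ∀ n k : ℕ, n < k → TN n k = 0
  | 0, k, h => by simp [TN]; omega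
  | 1, k, h => by simp [TN]; omega
  | n + 2, 0, h => by simp [TN]
  | n + 2, k + 1, h => by
    simp [TN, TN_eq_zero (n + 1) k (by omega), TN_eq_zero n k (by omega)]

open Polynomial in
/-- Generating polynomial of the number of faces with a given vertex set. -/
noncomputable def TP : ℕ → ℚ[X]
  | 0 => 1
  | 1 => (X - 1) * C (1 / 2 : ℚ)
  | n + 2 => (X - 1) * C (1 / 2 : ℚ) * (2 * TP (n + 1) + TP n)

open Polynomial in
theorem TP_eq : ∀ n K : ℕ, n ≤ K →
    ∑ k ∈ Finset.range (K + 1), C (TN n k : ℚ) * ((X - 1) * C (1 / 2 : ℚ)) ^ k = TP n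
  | 0, K, h => by
    rw [Finset.sum_eq_single 0]
    · simp [TN, TP]
    · intro k _ hk; simp [TN, hk]
    · simp
  | 1, K, h => by
    rw [Finset.sum_eq_single 1]
    · simp [TN, TP]
    · intro k _ hk; simp [TN, hk]
    · intro h'; simp at h'; omega
  | n + 2, K, h => by
    obtain ⟨K, rfl⟩ : ∃ m, K = m + 1 := ⟨K - 1, by omega⟩
    rw [Finset.sum_range_succ', TP, ← TP_eq (n + 1) K (by omega), ← TP_eq n K (by omega)]
    simp only [TN, Finset.mul_sum, ← Finset.sum_add_distrib]
    simp only [Nat.cast_zero, C_0, zero_mul, add_zero]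
    refine Finset.sum_congr rfl fun k _ => ?_
    push_cast
    simp only [C_add]
    ring

open Polynomial in
theorem TP_eq_Icc (n K : ℕ) (hn : 1 ≤ n) (h : n ≤ K) :
    ∑ k ∈ Finset.Icc 1 K, C (TN n k : ℚ) * ((X - 1) * C (1 / 2 : ℚ)) ^ k = TP n := by
  rw [← TP_eq n K h, Finset.range_eq_Ico, Finset.sum_eq_sum_Ico_succ_bot (by omega)]
  have : TN n 0 = 0 := by
    rcases n with _ | _ | n
    · omega
    · simp [TN]
    · simp [TN]
  rw [this]
  simp only [Nat.cast_zero, C_0, zero_mul, zero_add]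
  rfl

open Polynomial in
/-- Iterated sums. -/
noncomputable def TH : ℕ → ℕ → ℚ[X]
  | 0, i => 2 ^ i * TP i
  | m + 1, i => TH m i + TH m (i + 1)

open Polynomial in
theorem TH_shift : ∀ m i : ℕ, TH m (i + 2) = 2 * (X - 1) * TH (m + 1) i
  | 0, i => by
    have h : (2 : ℚ[X]) * C (1 / 2 : ℚ) = 1 := by
      rw [← C_ofNat, ← C_mul]; norm_num
    simp only [TH, TP]
    linear_combination (2 ^ (i + 1) * (X - 1) * (2 * TP (i + 1) + TP i)) * h
  | m + 1, i => by
    have h1 : TH (m + 2) i = TH (m + 1) i + TH (m + 1) (i + 1) := rfl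
    rw [TH, TH_shift m i, TH_shift m (i + 1), h1]
    ring

open Polynomial in
theorem TH_eq (m : ℕ) : TH m 0 = Polynomial.Chebyshev.T ℚ (m : ℤ) ∧
    TH (m + 1) 0 = Polynomial.Chebyshev.T ℚ ((m + 1 : ℕ) : ℤ) := by
  induction m with
  | zero =>
    have h : (2 : ℚ[X]) * C (1 / 2 : ℚ) = 1 := by
      rw [← C_ofNat, ← C_mul]; norm_num
    constructor
    · simp [TH, TP]
    · simp only [TH, TP, zero_add, pow_zero, pow_one, Nat.cast_one, Polynomial.Chebyshev.T_one]
      linear_combination (X - 1) * h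
  | succ m ih =>
    refine ⟨ih.2, ?_⟩
    have h1 : TH (m + 2) 0 = 2 * X * TH (m + 1) 0 - TH m 0 := by
      have h2 : TH (m + 2) 0 = TH (m + 1) 0 + TH (m + 1) 1 := rfl
      have h3 : TH (m + 1) 1 = TH m 1 + TH m 2 := rfl
      have h4 : TH (m + 1) 0 = TH m 0 + TH m 1 := rfl
      have h5 := TH_shift m 0
      simp only [zero_add] at h5
      linear_combination h2 + h3 + h5 - h4
    have h6 := Polynomial.Chebyshev.T_add_two ℚ (m : ℤ)
    rw [show m + 1 + 1 = m + 2 from rfl, h1, ih.1, ih.2]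
    push_cast
    rw [h6]

open Polynomial in
theorem sum_powerset_TP (s : Finset ℕ) : ∀ i,
    ∑ Q ∈ s.powerset, (2 : ℚ[X]) ^ (Q.card + i) * TP (Q.card + i) = TH s.card i := by
  induction s using Finset.induction_on with
  | empty => intro i; simp [TH]
  | insert a s ha ih =>
    intro i
    rw [Finset.sum_powerset_insert ha, Finset.card_insert_of_notMem ha, TH, ← ih, ← ih]
    congr 1
    refine Finset.sum_congr rfl fun Q hQ => ?_
    have : a ∉ Q := fun h => ha (Finset.mem_powerset.1 hQ h)
    rw [Finset.card_insert_of_notMem this, show Q.card + 1 + i = Q.card + (i + 1) by ring]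

theorem mem_signedFace (F : Finset ℕ) (Q B : Finset ℕ) (x : Finset ℕ × ℕ × Bool) :
    x ∈ Q.image (fun q => (F, q, decide (q ∈ B))) ↔
      x.1 = F ∧ x.2.1 ∈ Q ∧ x.2.2 = decide (x.2.1 ∈ B) := by
  obtain ⟨G, q, b⟩ := x
  simp only [Finset.mem_image, Prod.mk.injEq]
  constructor
  · rintro ⟨q', h1, rfl, rfl, rfl⟩; exact ⟨rfl, h1, rfl⟩
  · rintro ⟨rfl, h1, h2⟩; exact ⟨q, h1, rfl, rfl, h2.symm⟩

theorem card_signedFace (F : Finset ℕ) (Q B : Finset ℕ) :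
    (Q.image (fun q => (F, q, decide (q ∈ B)))).card = Q.card := by
  refine Finset.card_image_of_injective _ ?_
  intro a b h
  simp only [Prod.mk.injEq] at h
  exact h.2.1

open Polynomial in
theorem sum_signedUnused (Γ : Finset (Finset ℕ)) (c : ℕ → ℕ) (D : ℕ) :
    ∑ S ∈ signedUnusedVertexSets Γ c D, TP S.card =
      ∑ F ∈ Γ, (Polynomial.Chebyshev.T ℚ ((Finset.Icc 1 D \ F.image c).card : ℤ) - 1) := by
  have hQ : ∀ F Q B F' Q' B' : Finset ℕ,
      (∀ x, x ∈ Q.image (fun q => (F, q, decide (q ∈ B))) ↔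
        x ∈ Q'.image (fun q => (F', q, decide (q ∈ B')))) → Q ⊆ Q' ∧ (Q ≠ ∅ → F = F') ∧
          ∀ q ∈ Q, (q ∈ B ↔ q ∈ B') := by
    intro F Q B F' Q' B' h
    simp only [mem_signedFace] at h
    have h' : ∀ q ∈ Q, F = F' ∧ q ∈ Q' ∧ decide (q ∈ B) = decide (q ∈ B') :=
      fun q hq => (h (F, q, decide (q ∈ B))).1 ⟨rfl, hq, rfl⟩
    refine ⟨fun q hq => (h' q hq).2.1, fun hne => ?_, fun q hq => ?_⟩
    · obtain ⟨q, hq⟩ := Finset.nonempty_iff_ne_empty.2 hne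
      exact (h' q hq).1
    · simpa using (h' q hq).2.2
  rw [signedUnusedVertexSets, Finset.sum_biUnion]
  · refine Finset.sum_congr rfl fun F _ => ?_
    rw [Finset.sum_biUnion]
    · rw [← (TH_eq _).1, ← sum_powerset_TP, eq_sub_iff_add_eq,
        ← Finset.sum_filter_add_sum_filter_not (Finset.Icc 1 D \ F.image c).powerset
          (fun Q => Q ≠ ∅)]
      congr 1
      · refine Finset.sum_congr rfl fun Q _ => ?_
        rw [Finset.sum_image]
        · simp only [card_signedFace, Finset.sum_const, Finset.card_powerset, add_zero]
          simp
        · intro B hB B' hB' h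
          obtain ⟨-, -, h3⟩ := hQ F Q B F Q B' (fun x => by simp only at h; rw [h])
          simp only [Finset.coe_powerset, Set.mem_preimage, Set.mem_powerset_iff,
            Finset.coe_subset] at hB hB'
          ext q
          constructor
          · intro hq; exact (h3 q (hB hq)).1 hq
          · intro hq; exact (h3 q (hB' hq)).2 hq
      · rw [Finset.sum_eq_single ∅]
        · simp [TP]
        · intro Q hQ' hne; simp at hQ'; exact absurd hQ'.2 hne
        · simp
    · intro Q _ Q' _ hne
      rw [Function.onFun, Finset.disjoint_left]
      intro S h1 h2
      obtain ⟨B, -, rfl⟩ := Finset.mem_image.1 h1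
      obtain ⟨B', -, h⟩ := Finset.mem_image.1 h2
      exact hne (Finset.Subset.antisymm (hQ F Q B F Q' B' (fun x => by rw [h])).1
        (hQ F Q' B' F Q B (fun x => by rw [h])).1)
  · intro F _ F' _ hne
    rw [Function.onFun, Finset.disjoint_left]
    intro S h1 h2
    obtain ⟨Q, hQn, h1⟩ := Finset.mem_biUnion.1 h1
    obtain ⟨Q', -, h2⟩ := Finset.mem_biUnion.1 h2
    obtain ⟨B, -, rfl⟩ := Finset.mem_image.1 h1
    obtain ⟨B', -, h⟩ := Finset.mem_image.1 h2
    exact hne ((hQ F Q B F' Q' B' (fun x => by rw [h])).2.1 (Finset.mem_filter.1 hQn).2)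

theorem card_of_mem_signedUnused (Γ : Finset (Finset ℕ)) (c : ℕ → ℕ) (D : ℕ)
    (S : Finset (Finset ℕ × ℕ × Bool)) (hS : S ∈ signedUnusedVertexSets Γ c D) :
    1 ≤ S.card ∧ S.card ≤ D := by
  rw [signedUnusedVertexSets] at hS
  obtain ⟨F, -, h⟩ := Finset.mem_biUnion.1 hS
  obtain ⟨Q, hQ, h⟩ := Finset.mem_biUnion.1 h
  obtain ⟨B, -, rfl⟩ := Finset.mem_image.1 h
  rw [card_signedFace]
  rw [Finset.mem_filter, Finset.mem_powerset] at hQ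
  refine ⟨Finset.card_pos.2 (Finset.nonempty_iff_ne_empty.2 hQ.2), ?_⟩
  have := Finset.card_le_card (hQ.1.trans Finset.sdiff_subset)
  simpa using this

open Polynomial in
/-- Let `d` be even, `D = d/2`, `Γ` a `(D-1)`-dimensional balanced simplicial complex,
`h i = f_{i-1}(Γ)`, and `g(2w) = h_D + 2 ∑_{j=1}^{D} h_{D-j} T_j(w)`.  Then in `ℚ[w]`:
`(g(2w) + f_{D-1}(Γ))/2 - ∑_{j=0}^{D} f_{D-j-1}(Γ) + 1
  = 1 + ∑_{k=1}^{D} f_{k-1}(T(A_Γ))·((w-1)/2)^k`,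
i.e. the left-hand side is the F-polynomial of the Tchebyshev triangulation of the signed
unused color complex of `Γ` (with respect to an arbitrary linear order on its vertices). -/
theorem g_poly_eq_F_tcheb_signedUnused
    (d D : ℕ) (hd : Even d) (hDd : D = d / 2) (hD : 1 ≤ D)
    (Γ : Finset (Finset ℕ))
    (hΓ : IsSimplicialComplex Γ)
    (hdim : ∀ F ∈ Γ, F.card ≤ D) (hpure : ∃ F ∈ Γ, F.card = D)
    (c : ℕ → ℕ)
    (hcol : ∀ F ∈ Γ, ∀ x ∈ F, c x ∈ Finset.Icc 1 D)
    (hinj : ∀ F ∈ Γ, Set.InjOn c (F : Set ℕ))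
    (instL : LinearOrder (Finset ℕ × ℕ × Bool)) :
    C (1 / 2 : ℚ) *
        ((C ((faceCount Γ D : ℚ)) +
            2 * ∑ j ∈ Finset.Icc 1 D,
              C ((faceCount Γ (D - j) : ℚ)) * Polynomial.Chebyshev.T ℚ (j : ℤ))
          + C ((faceCount Γ D : ℚ)))
      - C (∑ j ∈ Finset.range (D + 1), ((faceCount Γ (D - j) : ℚ)))
      + 1
      = 1 + ∑ k ∈ Finset.Icc 1 D,
          C (((@tchebFaces (Finset ℕ × ℕ × Bool) instL _
                (signedUnusedVertexSets Γ c D) k).ncard : ℚ)) *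
            ((X - 1) * C (1 / 2 : ℚ)) ^ k := by
  have hcard : ∀ F ∈ Γ, (Finset.Icc 1 D \ F.image c).card = D - F.card := by
    intro F hF
    rw [Finset.card_sdiff_of_subset, Finset.card_image_of_injOn (hinj F hF)]
    · simp
    · intro y hy
      obtain ⟨x, hx, rfl⟩ := Finset.mem_image.1 hy
      exact hcol F hF x hx
  have hR : ∑ k ∈ Finset.Icc 1 D,
          C (((@tchebFaces (Finset ℕ × ℕ × Bool) instL _
                (signedUnusedVertexSets Γ c D) k).ncard : ℚ)) *
            ((X - 1) * C (1 / 2 : ℚ)) ^ k =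
      ∑ F ∈ Γ, (Polynomial.Chebyshev.T ℚ ((D - F.card : ℕ) : ℤ) - 1) := by
    have h1 : ∀ k, (@tchebFaces (Finset ℕ × ℕ × Bool) instL _
                (signedUnusedVertexSets Γ c D) k).ncard =
        ∑ S ∈ signedUnusedVertexSets Γ c D, TN S.card k := fun k => by
      exact @ncard_tchebFaces _ instL _ _ k
    simp only [h1, Nat.cast_sum, map_sum, Finset.sum_mul]
    rw [Finset.sum_comm]
    rw [Finset.sum_congr rfl fun S hS => TP_eq_Icc S.card D
      (card_of_mem_signedUnused Γ c D S hS).1 (card_of_mem_signedUnused Γ c D S hS).2,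
      sum_signedUnused]
    exact Finset.sum_congr rfl fun F hF => by rw [hcard F hF]
  rw [hR]
  have hF : ∀ f : ℕ → ℚ[X], ∑ F ∈ Γ, f (D - F.card) =
      ∑ j ∈ Finset.range (D + 1), C ((faceCount Γ (D - j) : ℚ)) * f j := by
    intro f
    rw [← Finset.sum_fiberwise_of_maps_to (s := Γ) (t := Finset.range (D + 1))
      (g := fun F => D - F.card) (fun F _ => Finset.mem_range.2 (by omega))]
    refine Finset.sum_congr rfl fun j hj => ?_
    rw [Finset.sum_congr rfl (g := fun _ => f j)
      (fun F hF => by rw [(Finset.mem_filter.1 hF).2])]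
    have : Γ.filter (fun F => D - F.card = j) = Γ.filter (fun F => F.card = D - j) := by
      refine Finset.filter_congr fun F hF => ?_
      have := hdim F hF
      have := Finset.mem_range.1 hj
      omega
    rw [this, Finset.sum_const, faceCount, nsmul_eq_mul]
    simp
  rw [hF (fun j => Polynomial.Chebyshev.T ℚ (j : ℤ) - 1)]
  simp only [mul_sub, Finset.sum_sub_distrib, mul_one, map_sum]
  have h2 : ∑ j ∈ Finset.range (D + 1),
      C ((faceCount Γ (D - j) : ℚ)) * Polynomial.Chebyshev.T ℚ (j : ℤ) =
      C ((faceCount Γ D : ℚ)) + ∑ j ∈ Finset.Icc 1 D,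
              C ((faceCount Γ (D - j) : ℚ)) * Polynomial.Chebyshev.T ℚ (j : ℤ) := by
    rw [Finset.range_eq_Ico, Finset.sum_eq_sum_Ico_succ_bot (by omega)]
    congr 1
    simp
  rw [h2]
  have h : (2 : ℚ[X]) * C (1 / 2 : ℚ) = 1 := by
    rw [← C_ofNat, ← C_mul]; norm_num
  linear_combination (C ((faceCount Γ D : ℚ)) + ∑ j ∈ Finset.Icc 1 D,
              C ((faceCount Γ (D - j) : ℚ)) * Polynomial.Chebyshev.T ℚ (j : ℤ)) * h
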